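/- Let R : ℝ² → ℝ be a Schwartz function (smooth with all derivatives rapidly decaying). For v ∈ ℝ² \ {0} define D_{mn}(v) = −(1/(2‖v‖)) ∫_{−∞}^{∞} ∂²_{y_m y_n} R(s v̂) ds for m, n ∈ {1,2}, where v̂ = v/‖v‖. Then for every v ≠ 0 and every m ∈ {1,2}, Σ_{n=1}^{2} D_{mn}(v) v_n = 0; that is, the diffusion matrix D(v) annihilates the vector v. -/

import Mathlib

open MeasureTheory

/-!
Since `v̂ = v / ‖v‖` and partial derivatives commute, `Σ_n ∂_m ∂_n R(s v̂) v_n` equals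
`∂_v ∂_m R(s v̂) = ‖v‖ (d/ds) (∂_m R)(s v̂)`. The restriction of a Schwartz function to a line
through the origin is again Schwartz, hence integrable, so the integral over `s` of this total
derivative vanishes by the fundamental theorem of calculus. The same integrability allows the sum
over `n` to be taken inside the integral.
-/

open LineDeriv in
lemma schwartz_lineDerivOp_comm {E : Type*} [NormedAddCommGroup E] [NormedSpace ℝ E]
    (f : SchwartzMap E ℝ) (u w : E) : ∂_{u} (∂_{w} f) = ∂_{w} (∂_{u} f) := by
  have key (a b x : E) : ∂_{a} (∂_{b} f) x = fderiv ℝ (fderiv ℝ f) x a b := by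
    change fderiv ℝ (fun y => fderiv ℝ f y b) x a = _
    have hd : DifferentiableAt ℝ (fderiv ℝ f) x :=
      (SchwartzMap.fderivCLM ℝ E ℝ f).differentiableAt
    rw [fderiv_clm_apply hd (differentiableAt_const b)]
    simp
  ext x
  have hs : IsSymmSndFDerivAt ℝ f x :=
    (f.smooth 2).contDiffAt.isSymmSndFDerivAt (by simp)
  rw [key, key, hs.eq]

lemma schwartz_integrable_line {E : Type*} [NormedAddCommGroup E] [NormedSpace ℝ E]
    (f : SchwartzMap E ℝ) {u : E} (hu : u ≠ 0) : Integrable (fun s : ℝ => f (s • u)) := by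
  let L : ℝ →L[ℝ] E := (ContinuousLinearMap.id ℝ ℝ).smulRight u
  -- A nonzero line is parametrized with constant speed `‖u‖`, so the parametrization expands
  -- distances by exactly this factor.
  have hL : AntilipschitzWith ‖u‖₊⁻¹ L := by
    refine L.antilipschitz_of_bound fun s => ?_
    have : ‖u‖ ≠ 0 := norm_ne_zero_iff.mpr hu
    simp only [L, ContinuousLinearMap.smulRight_apply, ContinuousLinearMap.id_apply, norm_smul,
      NNReal.coe_inv, coe_nnnorm]
    apply le_of_eq
    field_simp
  exact (SchwartzMap.compCLMOfAntilipschitz ℝ L.hasTemperateGrowth hL f).integrable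

open LineDeriv in
/-- The integral along a line of the derivative in the direction of that line vanishes. -/
lemma schwartz_integral_line_deriv {E : Type*} [NormedAddCommGroup E] [NormedSpace ℝ E]
    (f : SchwartzMap E ℝ) {u : E} (hu : u ≠ 0) : ∫ s : ℝ, (∂_{u} f) (s • u) = 0 := by
  refine integral_eq_zero_of_hasDerivAt_of_integrable (f := fun s : ℝ => f (s • u))
    (fun s => ?_) (schwartz_integrable_line _ hu) (schwartz_integrable_line f hu)
  have h : HasDerivAt (fun s : ℝ => s • u) u s := by
    simpa using (hasDerivAt_id s).smul_const u
  exact (f.hasFDerivAt (s • u)).comp_hasDerivAt s h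

open LineDeriv in
/-- Degeneracy of the limiting momentum diffusion in the radial direction: the diffusion
matrix `D_{mn}(v) = -(1/(2‖v‖)) ∫ ∂²_{y_m y_n} R(s v̂) ds` built from a Schwartz
correlation function `R` annihilates the vector `v`, i.e. `Σ_n D_{mn}(v) v_n = 0`, so the
limit diffusion is supported on the circle of radius `|v|` in momentum space. -/
theorem diffusion_matrix_annihilates_v
    (R : SchwartzMap (EuclideanSpace ℝ (Fin 2)) ℝ) :
    let e : Fin 2 → EuclideanSpace ℝ (Fin 2) := fun i => EuclideanSpace.single i 1
    let D : Fin 2 → Fin 2 → EuclideanSpace ℝ (Fin 2) → ℝ := fun m n v =>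
      -(1 / (2 * ‖v‖)) *
        ∫ s : ℝ, fderiv ℝ (fun y => fderiv ℝ (fun z => R z) y (e n)) (s • ‖v‖⁻¹ • v) (e m)
    ∀ v : EuclideanSpace ℝ (Fin 2), v ≠ 0 → ∀ m : Fin 2,
      ∑ n : Fin 2, D m n v * v n = 0 := by
  intro e D v hv m
  set u := ‖v‖⁻¹ • v with hu_def
  have hn : ‖v‖ ≠ 0 := norm_ne_zero_iff.mpr hv
  have hu : u ≠ 0 := smul_ne_zero (inv_ne_zero hn) hv
  have hvu : v = ‖v‖ • u := by rw [hu_def, smul_smul, mul_inv_cancel₀ hn, one_smul]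
  have hsum : ∑ n, v n • e n = v := by
    simpa [e] using (EuclideanSpace.basisFun (Fin 2) ℝ).sum_repr v
  have hD (n : Fin 2) :
      D m n v = -(1 / (2 * ‖v‖)) * ∫ s : ℝ, (∂_{e m} (∂_{e n} R)) (s • u) := rfl
  have hpt (s : ℝ) : ∑ n, (∂_{e m} (∂_{e n} R)) (s • u) * v n
      = ‖v‖ * (∂_{u} (∂_{e m} R)) (s • u) := by
    simp_rw [schwartz_lineDerivOp_comm R (e m), SchwartzMap.lineDerivOp_apply_eq_fderiv]
    rw [← smul_eq_mul, ← map_smul, ← hvu]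
    nth_rw 2 [← hsum]
    simp [mul_comm]
  simp_rw [hD, mul_assoc]
  rw [← Finset.mul_sum]
  simp_rw [← integral_mul_const]
  rw [← integral_finsetSum _ fun n _ => (schwartz_integrable_line _ hu).mul_const (v n)]
  simp_rw [hpt]
  rw [integral_const_mul, schwartz_integral_line_deriv _ hu]
  simp
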